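/- arXiv:2011.01702 — 3 statements merged into one kernel-verified Lean document; each statement's English description precedes it below -/
import Mathlib

section
/- Let T be a triangulated category with a semiorthogonal decomposition T = ⟨T₁, T₂⟩, and let T₁^{≤0} and T₂^{≤0} be t-structures on T₁ and T₂ respectively that are compatible in T, so that T^{≤0} := T₂^{≤0} * (T₁^{≤0}[1]) is a t-structure on T. If T₁^{≤0} and T₂^{≤0} are both bounded, then T^{≤0} is a bounded t-structure on T. -/
open CategoryTheory Category Limits Pretriangulated

namespace Paper

universe v u

variable {C : Type u} [Category.{v} C] [HasZeroObject C] [Preadditive C]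
  [HasShift C ℤ] [∀ n : ℤ, (shiftFunctor C n).Additive] [Pretriangulated C]

/-- The right orthogonal of a set of objects: objects receiving only zero maps. -/
def rOrth (S : Set C) : Set C := {Y | ∀ X ∈ S, ∀ f : X ⟶ Y, f = 0}

/-- Shift of a set of objects by `n` (closed under isomorphism). -/
def shSet (S : Set C) (n : ℤ) : Set C := {Y | ∃ X ∈ S, Nonempty (Y ≅ X⟦n⟧)}

/-- The `*` operation on sets of objects of a triangulated category. -/
def star (X Y : Set C) : Set C :=
  {Z | ∃ (A : C) (_ : A ∈ X) (B : C) (_ : B ∈ Y) (f : A ⟶ Z) (g : Z ⟶ B)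
    (h : B ⟶ A⟦(1 : ℤ)⟧), Triangle.mk f g h ∈ distTriang C}

/-- A strictly full triangulated subcategory, encoded as a set of objects. -/
structure IsTriangulatedSub (S : Set C) : Prop where
  zero : ∀ X : C, IsZero X → X ∈ S
  isoClosed : ∀ {X Y : C}, (X ≅ Y) → X ∈ S → Y ∈ S
  shift : ∀ (n : ℤ), ∀ X ∈ S, X⟦n⟧ ∈ S
  ext₂ : ∀ T ∈ distTriang C, T.obj₁ ∈ S → T.obj₃ ∈ S → T.obj₂ ∈ S

/-- A t-structure on the full triangulated subcategory `S ⊆ C`, given by its aisle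
`le` (playing the role of `S^{≤ 0}`).  The coaisle `S^{≥ 1}` is `S ∩ rOrth le`. -/
structure IsTStructureOn (S le : Set C) : Prop where
  subset : le ⊆ S
  isoClosed : ∀ {X Y : C}, (X ≅ Y) → X ∈ le → Y ∈ le
  shift : ∀ X ∈ le, X⟦(1 : ℤ)⟧ ∈ le
  exists_triangle : ∀ E ∈ S, ∃ (A B : C) (_ : A ∈ le) (_ : B ∈ S ∩ rOrth le)
    (f : A ⟶ E) (g : E ⟶ B) (h : B ⟶ A⟦(1 : ℤ)⟧), Triangle.mk f g h ∈ distTriang C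

/-- `S^{≤ i} := S^{≤ 0}[-i]`. -/
def leN (le : Set C) (i : ℤ) : Set C := shSet le (-i)

/-- `S^{≥ j} := S^{≥ 1}[-j+1]`. -/
def geN (S le : Set C) (j : ℤ) : Set C := shSet (S ∩ rOrth le) (1 - j)

/-- The heart `S^{≤ 0} ∩ S^{≥ 0}` of a t-structure on `S`. -/
def heartOn (S le : Set C) : Set C := leN le 0 ∩ geN S le 0

/-- Boundedness of a t-structure on `S`. -/
def IsBoundedOn (S le : Set C) : Prop := ∀ E ∈ S, ∃ i j : ℤ, E ∈ leN le i ∧ E ∈ geN S le j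

/-- Non-degeneracy of a t-structure on `S`. -/
def IsNonDegenerateOn (S le : Set C) : Prop :=
  (∀ E : C, (∀ i : ℤ, E ∈ leN le i) → IsZero E) ∧
  (∀ E : C, (∀ j : ℤ, E ∈ geN S le j) → IsZero E)

/-- A semiorthogonal decomposition `C = ⟨S₁, S₂⟩`. -/
structure IsSOD (S₁ S₂ : Set C) : Prop where
  sub₁ : IsTriangulatedSub S₁
  sub₂ : IsTriangulatedSub S₂
  orth : ∀ X ∈ S₂, ∀ Y ∈ S₁, ∀ f : X ⟶ Y, f = 0
  exists_triangle : ∀ E : C, ∃ (A B : C) (_ : A ∈ S₂) (_ : B ∈ S₁)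
    (f : A ⟶ E) (g : E ⟶ B) (h : B ⟶ A⟦(1 : ℤ)⟧), Triangle.mk f g h ∈ distTriang C

/-- Compatibility of t-structures `le₁` on `S₁` and `le₂` on `S₂` in `C`:
`Hom(S₁^{≤0}, S₂^{≥1}) = 0`. -/
def Compatible (S₂ le₁ le₂ : Set C) : Prop :=
  ∀ X ∈ le₁, ∀ Y ∈ S₂ ∩ rOrth le₂, ∀ f : X ⟶ Y, f = 0

/-- The glued aisle `T^{≤0} := T₂^{≤0} * (T₁^{≤0}[1])`. -/
def glued (le₁ le₂ : Set C) : Set C := star le₂ (shSet le₁ 1)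

/-- Vanishing of Hom into the third object gives surjectivity on Hom. -/
lemma surj_of_orth {A E B : C} {f : A ⟶ E} {g : E ⟶ B} {h : B ⟶ A⟦(1 : ℤ)⟧}
    (hT : Triangle.mk f g h ∈ distTriang C) {X : C} (hX : ∀ k : X ⟶ B, k = 0)
    (k : X ⟶ E) : ∃ l : X ⟶ A, k = l ≫ f :=
  Triangle.coyoneda_exact₂ _ hT k (hX _)

/-- Vanishing of Hom into the third object gives injectivity on Hom to the shift. -/
lemma inj_of_orth {A E B : C} {f : A ⟶ E} {g : E ⟶ B} {h : B ⟶ A⟦(1 : ℤ)⟧}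
    (hT : Triangle.mk f g h ∈ distTriang C) {X : C} (hX : ∀ k : X ⟶ B, k = 0)
    (k : X ⟶ A⟦(1 : ℤ)⟧) (hk : k ≫ f⟦(1 : ℤ)⟧' = 0) : k = 0 := by
  obtain ⟨l, hl⟩ : ∃ l : X ⟶ B, k = l ≫ h := Triangle.coyoneda_exact₁ _ hT k hk
  rw [hl, hX l, zero_comp]

/-- Four lemma, surjective half. -/
lemma four_surj {T T' : Triangle C} (hT : T ∈ distTriang C) (hT' : T' ∈ distTriang C)
    (φ : T ⟶ T') {X : C}
    (s₁ : ∀ k : X ⟶ T'.obj₁, ∃ l : X ⟶ T.obj₁, k = l ≫ φ.hom₁)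
    (s₃ : ∀ k : X ⟶ T'.obj₃, ∃ l : X ⟶ T.obj₃, k = l ≫ φ.hom₃)
    (i₁ : ∀ k : X ⟶ T.obj₁⟦(1 : ℤ)⟧, k ≫ φ.hom₁⟦(1 : ℤ)⟧' = 0 → k = 0)
    (f : X ⟶ T'.obj₂) : ∃ l : X ⟶ T.obj₂, f = l ≫ φ.hom₂ := by
  obtain ⟨g, hg⟩ := s₃ (f ≫ T'.mor₂)
  have h0 : g ≫ T.mor₃ = 0 := by
    apply i₁
    rw [assoc, φ.comm₃, ← assoc, ← hg, assoc, comp_distTriang_mor_zero₂₃ _ hT', comp_zero]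
  obtain ⟨k, hk⟩ := Triangle.coyoneda_exact₃ _ hT g h0
  obtain ⟨l, hl⟩ := Triangle.coyoneda_exact₂ _ hT' (f - k ≫ φ.hom₂) (by
    rw [Preadditive.sub_comp, hg, hk, assoc, assoc, φ.comm₂, sub_self])
  obtain ⟨m, hm⟩ := s₁ l
  refine ⟨k + m ≫ T.mor₁, ?_⟩
  rw [Preadditive.add_comp, assoc, φ.comm₁, ← assoc, ← hm, ← hl]
  abel

/-- Four lemma, injective half. -/
lemma four_inj {T T' : Triangle C} (hT : T ∈ distTriang C) (hT' : T' ∈ distTriang C)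
    (φ : T ⟶ T') {X : C}
    (s₃ : ∀ k : X ⟶ T'.obj₃, ∃ l : X ⟶ T.obj₃, k = l ≫ φ.hom₃)
    (i₁ : ∀ k : X ⟶ T.obj₁⟦(1 : ℤ)⟧, k ≫ φ.hom₁⟦(1 : ℤ)⟧' = 0 → k = 0)
    (i₃ : ∀ k : X ⟶ T.obj₃⟦(1 : ℤ)⟧, k ≫ φ.hom₃⟦(1 : ℤ)⟧' = 0 → k = 0)
    (f : X ⟶ T.obj₂⟦(1 : ℤ)⟧) (hf : f ≫ φ.hom₂⟦(1 : ℤ)⟧' = 0) : f = 0 := by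
  have h0 : f ≫ T.mor₂⟦(1 : ℤ)⟧' = 0 := by
    apply i₃
    rw [assoc, ← Functor.map_comp, φ.comm₂, Functor.map_comp, ← assoc, hf, zero_comp]
  obtain ⟨g, hg⟩ := Triangle.coyoneda_exact₁ _ (rot_of_distTriang _ hT) f h0
  change X ⟶ T.obj₁⟦(1 : ℤ)⟧ at g
  change f = g ≫ (-T.mor₁⟦(1 : ℤ)⟧') at hg
  have h1 : (g ≫ φ.hom₁⟦(1 : ℤ)⟧') ≫ T'.mor₁⟦(1 : ℤ)⟧' = 0 := by
    rw [assoc, ← Functor.map_comp, ← φ.comm₁, Functor.map_comp, ← assoc]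
    rw [hg, Preadditive.comp_neg, Preadditive.neg_comp, neg_eq_zero] at hf
    exact hf
  obtain ⟨k, hk⟩ := Triangle.coyoneda_exact₁ _ hT' _ h1
  obtain ⟨m, hm⟩ := s₃ k
  have h2 : g - m ≫ T.mor₃ = 0 := by
    apply i₁
    rw [Preadditive.sub_comp, hk, hm, assoc, assoc, φ.comm₃, sub_self]
  rw [hg, sub_eq_zero.1 h2, Preadditive.comp_neg, assoc,
    comp_distTriang_mor_zero₃₁ _ hT, comp_zero, neg_zero]

lemma mem_shSet_iff {S : Set C} (hS : ∀ {X Y : C}, (X ≅ Y) → X ∈ S → Y ∈ S) (n m : ℤ)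
    (hnm : n + m = 0) (X : C) : X ∈ shSet S n ↔ X⟦m⟧ ∈ S := by
  constructor
  · rintro ⟨Y, hY, ⟨e⟩⟩
    exact hS ((shiftFunctorCompIsoId C n m hnm).symm.app Y ≪≫
      (shiftFunctor C m).mapIso e.symm) hY
  · intro h
    exact ⟨_, h, ⟨(shiftFunctorCompIsoId C m n (by omega)).symm.app X⟩⟩

lemma rOrth_iso {S : Set C} {X Y : C} (e : X ≅ Y) (h : X ∈ rOrth S) : Y ∈ rOrth S := by
  intro Z hZ f
  have := h Z hZ (f ≫ e.inv)
  rw [← cancel_mono e.inv, this, zero_comp]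

/-- Map out of a shifted object into a shifted object. -/
lemma hom_shift_zero {X Y : C} (n : ℤ) (h : ∀ f : X ⟶ Y, f = 0) (f : X⟦n⟧ ⟶ Y⟦n⟧) : f = 0 := by
  obtain ⟨g, rfl⟩ := (shiftFunctor C n).map_surjective f
  rw [h g, Functor.map_zero]

lemma rOrth_shift_neg {S : Set C} (hS : ∀ X ∈ S, X⟦(1 : ℤ)⟧ ∈ S) {Y : C} (hY : Y ∈ rOrth S) :
    Y⟦(-1 : ℤ)⟧ ∈ rOrth S := by
  intro X hX f
  have : f⟦(1 : ℤ)⟧' ≫ (shiftFunctorCompIsoId C (-1 : ℤ) 1 (by omega)).hom.app Y = 0 :=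
    hY _ (hS X hX) _
  apply (shiftFunctor C (1 : ℤ)).map_injective
  rw [Functor.map_zero]
  rwa [← cancel_mono ((shiftFunctorCompIsoId C (-1 : ℤ) 1 (by omega)).hom.app Y), zero_comp]

/-- Monotonicity of a family of shifts. -/
lemma shift_up {S : Set C} (iso : ∀ {X Y : C}, (X ≅ Y) → X ∈ S → Y ∈ S)
    (hS : ∀ X ∈ S, X⟦(1 : ℤ)⟧ ∈ S) {X : C} {a b : ℤ} (hab : a ≤ b) (h : X⟦a⟧ ∈ S) :
    X⟦b⟧ ∈ S := by
  induction b, hab using Int.le_induction with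
  | base => exact h
  | succ b _ ih => exact iso ((shiftFunctorAdd C b 1).symm.app X) (hS _ ih)

lemma shift_down {S : Set C} (iso : ∀ {X Y : C}, (X ≅ Y) → X ∈ S → Y ∈ S)
    (hS : ∀ X ∈ S, X⟦(-1 : ℤ)⟧ ∈ S) {X : C} {a b : ℤ} (hab : b ≤ a) (h : X⟦a⟧ ∈ S) :
    X⟦b⟧ ∈ S := by
  induction b, hab using Int.le_induction_down with
  | base => exact h
  | pred b _ ih => exact iso ((shiftFunctorAdd' C b (-1) (b - 1) (by omega)).symm.app X) (hS _ ih)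

/-- Shifting triangles, existential form. -/
lemma shift_tri {A E B : C} {f : A ⟶ E} {g : E ⟶ B} {h : B ⟶ A⟦(1 : ℤ)⟧}
    (hT : Triangle.mk f g h ∈ distTriang C) (n : ℤ) :
    ∃ (f' : A⟦n⟧ ⟶ E⟦n⟧) (g' : E⟦n⟧ ⟶ B⟦n⟧) (h' : B⟦n⟧ ⟶ A⟦n⟧⟦(1 : ℤ)⟧),
      Triangle.mk f' g' h' ∈ distTriang C :=
  ⟨_, _, _, Triangle.shift_distinguished _ hT n⟩

/-- Replacing the middle object by an isomorphic one. -/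
lemma iso_tri {A E E' B : C} {f : A ⟶ E} {g : E ⟶ B} {h : B ⟶ A⟦(1 : ℤ)⟧}
    (hT : Triangle.mk f g h ∈ distTriang C) (e : E ≅ E') :
    Triangle.mk (f ≫ e.hom) (e.inv ≫ g) h ∈ distTriang C := by
  refine isomorphic_distinguished _ hT _ ?_
  exact Triangle.isoMk _ _ (Iso.refl _) e.symm (Iso.refl _)
    (show (f ≫ e.hom) ≫ e.inv = 𝟙 A ≫ f by simp)
    (show (e.inv ≫ g) ≫ 𝟙 B = e.inv ≫ g by simp)
    (show h ≫ (𝟙 A)⟦(1 : ℤ)⟧' = 𝟙 B ≫ h by simp)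

lemma rOrth_of_tri {A E B : C} {f : A ⟶ E} {g : E ⟶ B} {h : B ⟶ A⟦(1 : ℤ)⟧}
    (hT : Triangle.mk f g h ∈ distTriang C) {X : C} (hA : ∀ k : X ⟶ A, k = 0)
    (hB : ∀ k : X ⟶ B, k = 0) (k : X ⟶ E) : k = 0 := by
  obtain ⟨l, rfl⟩ := surj_of_orth hT hB k
  rw [hA l, zero_comp]

lemma rOrth_star {P Q : Set C} {Y : C} (hP : Y ∈ rOrth P) (hQ : Y ∈ rOrth Q) :
    Y ∈ rOrth (star P Q) := by
  rintro X ⟨A, hA, B, hB, f, g, h, hT⟩ k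
  obtain ⟨l, hl⟩ : ∃ l : B ⟶ Y, k = g ≫ l := Triangle.yoneda_exact₂ _ hT k (hP A hA _)
  rw [hl, hQ B hB l, comp_zero]

/-- Theorem 2.7, item 1, boundedness: if the compatible t-structures
`le₁` and `le₂` are bounded, then the glued t-structure `T₂^{≤0} * (T₁^{≤0}[1])` is a
bounded t-structure on `C`. -/
theorem glued_isBounded {C : Type u} [Category.{v} C] [HasZeroObject C] [Preadditive C]
    [HasShift C ℤ] [∀ n : ℤ, (shiftFunctor C n).Additive] [Pretriangulated C]
    (S₁ S₂ le₁ le₂ : Set C) (hSOD : IsSOD S₁ S₂)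
    (h₁ : IsTStructureOn S₁ le₁) (h₂ : IsTStructureOn S₂ le₂)
    (hcomp : Compatible S₂ le₁ le₂)
    (hb₁ : IsBoundedOn S₁ le₁) (hb₂ : IsBoundedOn S₂ le₂) :
    IsTStructureOn Set.univ (glued le₁ le₂) ∧ IsBoundedOn Set.univ (glued le₁ le₂) := by
  have rOrth_L1 : ∀ X ∈ shSet le₁ 1, X ∈ le₁ := by
    rintro X ⟨Y, hY, ⟨e⟩⟩
    exact h₁.isoClosed e.symm (h₁.shift Y hY)
  have L1iso : ∀ {X Y : C}, (X ≅ Y) → X ∈ shSet le₁ 1 → Y ∈ shSet le₁ 1 := by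
    rintro X Y e ⟨Z, hZ, ⟨e'⟩⟩
    exact ⟨Z, hZ, ⟨e.symm ≪≫ e'⟩⟩
  have L1shift : ∀ X ∈ shSet le₁ 1, X⟦(1 : ℤ)⟧ ∈ shSet le₁ 1 := fun X hX =>
    ⟨X, rOrth_L1 X hX, ⟨Iso.refl _⟩⟩
  have giso : ∀ {X Y : C}, (X ≅ Y) → X ∈ glued le₁ le₂ → Y ∈ glued le₁ le₂ := by
    rintro X Y e ⟨A, hA, B, hB, f, g, h, hT⟩
    exact ⟨A, hA, B, hB, _, _, _, iso_tri hT e⟩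
  have gshift : ∀ X ∈ glued le₁ le₂, X⟦(1 : ℤ)⟧ ∈ glued le₁ le₂ := by
    rintro X ⟨A, hA, B, hB, f, g, h, hT⟩
    obtain ⟨f', g', h', hT'⟩ := shift_tri hT 1
    exact ⟨_, h₂.shift A hA, _, L1shift B hB, f', g', h', hT'⟩
  refine ⟨⟨Set.subset_univ _, giso, gshift, ?_⟩, ?_⟩
  · intro E _
    obtain ⟨E₂, E₁, hE₂, hE₁, a, b, c, hE⟩ := hSOD.exists_triangle E
    obtain ⟨A₂, B₂, hA₂, hB₂, p₂, q₂, r₂, hT₂⟩ := h₂.exists_triangle E₂ hE₂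
    obtain ⟨A₁, B₁, hA₁, hB₁S, hB₁, p₁, q₁, r₁, hT₁⟩ : ∃ (A₁ B₁ : C) (_ : A₁ ∈ shSet le₁ 1)
        (_ : B₁ ∈ S₁) (_ : B₁ ∈ rOrth (shSet le₁ 1)) (f : A₁ ⟶ E₁) (g : E₁ ⟶ B₁)
        (h : B₁ ⟶ A₁⟦(1 : ℤ)⟧), Triangle.mk f g h ∈ distTriang C := by
      obtain ⟨A, B, hA, hB, f, g, h, hT⟩ := h₁.exists_triangle _ (hSOD.sub₁.shift (-1) _ hE₁)
      obtain ⟨f', g', h', hT'⟩ := shift_tri hT 1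
      refine ⟨_, _, ⟨A, hA, ⟨Iso.refl _⟩⟩, hSOD.sub₁.shift 1 _ hB.1, ?_, _, _, _,
        iso_tri hT' ((shiftFunctorCompIsoId C (-1 : ℤ) 1 (by omega)).app E₁)⟩
      rintro X ⟨Y, hY, ⟨e⟩⟩ k
      rw [← cancel_epi e.inv, comp_zero]
      exact hom_shift_zero 1 (hB.2 Y hY) _
    have hz : ((p₁ ≫ c) ≫ q₂⟦(1 : ℤ)⟧') = 0 := by
      obtain ⟨Y, hY, ⟨e⟩⟩ := hA₁
      rw [← cancel_epi e.inv, comp_zero]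
      exact hom_shift_zero 1 (hcomp Y hY B₂ hB₂) _
    obtain ⟨d', hd'⟩ := Triangle.coyoneda_exact₁ _ (rot_of_distTriang _ hT₂) (p₁ ≫ c) hz
    change A₁ ⟶ A₂⟦(1 : ℤ)⟧ at d'
    change p₁ ≫ c = d' ≫ (-p₂⟦(1 : ℤ)⟧') at hd'
    obtain ⟨A, u, w, hA⟩ := distinguished_cocone_triangle₂ (-d')
    obtain ⟨φ, hφ1, hφ2⟩ := complete_distinguished_triangle_morphism₂ _ _ hA hE p₂ p₁ (by
      change (-d') ≫ p₂⟦(1 : ℤ)⟧' = p₁ ≫ c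
      rw [hd']; simp)
    change A ⟶ E at φ
    obtain ⟨B, g, h, hB⟩ := distinguished_cocone_triangle φ
    refine ⟨A, B, ⟨A₂, hA₂, A₁, hA₁, u, w, _, hA⟩, ⟨trivial, ?_⟩, φ, g, h, hB⟩
    let Φ : Triangle.mk u w (-d') ⟶ Triangle.mk a b c :=
      { hom₁ := p₂, hom₂ := φ, hom₃ := p₁, comm₁ := hφ1, comm₂ := hφ2
        comm₃ := by
          change (-d') ≫ p₂⟦(1 : ℤ)⟧' = p₁ ≫ c
          rw [hd']; simp }
    have key : ∀ X : C, (∀ k : X ⟶ B₂, k = 0) → (∀ k : X ⟶ B₁, k = 0) →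
        ∀ k : X ⟶ B, k = 0 := by
      intro X x2 x1 k
      have s := four_surj hA hE Φ (surj_of_orth hT₂ x2) (surj_of_orth hT₁ x1)
        (inj_of_orth hT₂ x2)
      have i := four_inj hA hE Φ (surj_of_orth hT₁ x1)
        (inj_of_orth hT₂ x2) (inj_of_orth hT₁ x1)
      have h0 : k ≫ h = 0 := i _ (by
        have := comp_distTriang_mor_zero₃₁ _ hB
        change h ≫ φ⟦(1 : ℤ)⟧' = 0 at this
        change (k ≫ h) ≫ φ⟦(1 : ℤ)⟧' = 0
        rw [assoc, this, comp_zero])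
      obtain ⟨l, hl⟩ : ∃ l : X ⟶ E, k = l ≫ g := Triangle.coyoneda_exact₃ _ hB k h0
      obtain ⟨m, hm⟩ : ∃ m : X ⟶ A, l = m ≫ φ := s l
      have h1 : φ ≫ g = 0 := comp_distTriang_mor_zero₁₂ _ hB
      rw [hl, hm, assoc, h1, comp_zero]
    apply rOrth_star
    · intro X hX
      exact key X (hB₂.2 X hX) (hSOD.orth X (h₂.subset hX) _ hB₁S)
    · intro X hX
      exact key X (hcomp X (rOrth_L1 X hX) _ hB₂) (hB₁ X hX)
  · intro E _
    obtain ⟨E₂, E₁, hE₂, hE₁, a, b, c, hE⟩ := hSOD.exists_triangle E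
    obtain ⟨i₁, j₁, hi₁, hj₁⟩ := hb₁ E₁ hE₁
    obtain ⟨i₂, j₂, hi₂, hj₂⟩ := hb₂ E₂ hE₂
    have iso1 : ∀ {X Y : C}, (X ≅ Y) → X ∈ S₁ ∩ rOrth le₁ → Y ∈ S₁ ∩ rOrth le₁ :=
      fun e h => ⟨hSOD.sub₁.isoClosed e h.1, rOrth_iso e h.2⟩
    have iso2 : ∀ {X Y : C}, (X ≅ Y) → X ∈ S₂ ∩ rOrth le₂ → Y ∈ S₂ ∩ rOrth le₂ :=
      fun e h => ⟨hSOD.sub₂.isoClosed e h.1, rOrth_iso e h.2⟩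
    have iso0 : ∀ {X Y : C}, (X ≅ Y) → X ∈ Set.univ ∩ rOrth (glued le₁ le₂) →
        Y ∈ Set.univ ∩ rOrth (glued le₁ le₂) :=
      fun e h => ⟨trivial, rOrth_iso e h.2⟩
    have dn1 : ∀ X ∈ S₁ ∩ rOrth le₁, X⟦(-1 : ℤ)⟧ ∈ S₁ ∩ rOrth le₁ :=
      fun X h => ⟨hSOD.sub₁.shift _ _ h.1, rOrth_shift_neg h₁.shift h.2⟩
    have dn2 : ∀ X ∈ S₂ ∩ rOrth le₂, X⟦(-1 : ℤ)⟧ ∈ S₂ ∩ rOrth le₂ :=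
      fun X h => ⟨hSOD.sub₂.shift _ _ h.1, rOrth_shift_neg h₂.shift h.2⟩
    have hi₁' := (mem_shSet_iff h₁.isoClosed (-i₁) i₁ (by omega) _).1 hi₁
    have hi₂' := (mem_shSet_iff h₂.isoClosed (-i₂) i₂ (by omega) _).1 hi₂
    have hj₁' := (mem_shSet_iff iso1 (1 - j₁) (j₁ - 1) (by omega) _).1 hj₁
    have hj₂' := (mem_shSet_iff iso2 (1 - j₂) (j₂ - 1) (by omega) _).1 hj₂
    refine ⟨max (i₁ + 1) i₂, min j₁ j₂, ?_, ?_⟩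
    · refine (mem_shSet_iff giso _ (max (i₁ + 1) i₂) (by omega) _).2 ?_
      obtain ⟨f', g', h', hT'⟩ := shift_tri hE (max (i₁ + 1) i₂)
      refine ⟨_, shift_up h₂.isoClosed h₂.shift (le_max_right _ _) hi₂', _, ?_, f', g', h', hT'⟩
      refine shift_up L1iso L1shift (le_max_left _ _) ?_
      exact ⟨_, hi₁', ⟨(shiftFunctorAdd C i₁ 1).app E₁⟩⟩
    · refine (mem_shSet_iff iso0 _ (min j₁ j₂ - 1) (by omega) _).2 ⟨trivial, ?_⟩
      obtain ⟨f', g', h', hT'⟩ := shift_tri hE (min j₁ j₂ - 1)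
      have k₁ := shift_down iso1 dn1 (b := min j₁ j₂ - 1) (by omega) hj₁'
      have k₂ := shift_down iso2 dn2 (b := min j₁ j₂ - 1) (by omega) hj₂'
      apply rOrth_star
      · intro X hX
        exact rOrth_of_tri hT' (k₂.2 X hX) (hSOD.orth X (h₂.subset hX) _ k₁.1)
      · intro X hX
        exact rOrth_of_tri hT' (hcomp X (rOrth_L1 X hX) _ k₂) (k₁.2 X (rOrth_L1 X hX))

end Paper
end

section
/- Let T be a triangulated category with a semiorthogonal decomposition T = ⟨T₁, T₂⟩, and let T₁^{≤0} and T₂^{≤0} be t-structures on T₁ and T₂ respectively that are compatible in T, so that T^{≤0} := T₂^{≤0} * (T₁^{≤0}[1]) is a t-structure on T. Let A₁, A₂ and A be the hearts of T₁^{≤0}, T₂^{≤0} and T^{≤0} respectively. Then A = A₂ * (A₁[1]). -/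
open CategoryTheory Category Limits Pretriangulated

namespace Paper

universe v u

variable {C : Type u} [Category.{v} C] [HasZeroObject C] [Preadditive C]
  [HasShift C ℤ] [∀ n : ℤ, (shiftFunctor C n).Additive] [Pretriangulated C]

/-- All morphisms from `X` to `Y` vanish. -/
def Van (X Y : C) : Prop := ∀ f : X ⟶ Y, f = 0

lemma Van.isoR {X Y Y' : C} (h : Van X Y) (e : Y' ≅ Y) : Van X Y' := by
  intro f
  rw [← cancel_mono e.hom, h (f ≫ e.hom), zero_comp]

lemma Van.isoL {X X' Y : C} (h : Van X Y) (e : X' ≅ X) : Van X' Y := by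
  intro f
  rw [← cancel_epi e.inv, h (e.inv ≫ f), comp_zero]

lemma Van.shift {X Y : C} (h : Van X Y) (n : ℤ) : Van (X⟦n⟧) (Y⟦n⟧) := by
  intro f
  obtain ⟨g, rfl⟩ := (shiftFunctor C n).map_surjective f
  rw [h g, Functor.map_zero]

lemma Van.unshift {X Y : C} {n : ℤ} (h : Van (X⟦n⟧) (Y⟦n⟧)) : Van X Y := by
  intro f
  apply (shiftFunctor C n).map_injective
  rw [h ((shiftFunctor C n).map f), Functor.map_zero]

/-- `Y ≅ Y⟦-1⟧⟦1⟧`. -/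
noncomputable def desh (Y : C) : Y ≅ Y⟦(-1 : ℤ)⟧⟦(1 : ℤ)⟧ :=
  (shiftFunctorCompIsoId C (-1 : ℤ) 1 (by norm_num)).symm.app Y

lemma Van.down {X Y : C} (h : Van (X⟦(1 : ℤ)⟧) Y) : Van X (Y⟦(-1 : ℤ)⟧) :=
  Van.unshift (n := 1) (h.isoR (desh Y).symm)

lemma Van.up {X Y : C} (h : Van X (Y⟦(-1 : ℤ)⟧)) : Van (X⟦(1 : ℤ)⟧) Y :=
  (h.shift 1).isoR (desh Y)

lemma Van.ext {X A E B : C} {f : A ⟶ E} {g : E ⟶ B} {h : B ⟶ A⟦(1 : ℤ)⟧}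
    (hT : Triangle.mk f g h ∈ distTriang C) (hA : Van X A) (hB : Van X B) : Van X E := by
  intro k
  obtain ⟨(l : X ⟶ A), (hl : k = l ≫ f)⟩ := Triangle.coyoneda_exact₂ _ hT k (hB _)
  rw [hl, hA l, zero_comp]

lemma Van.extL {X A E B : C} {f : A ⟶ E} {g : E ⟶ B} {h : B ⟶ A⟦(1 : ℤ)⟧}
    (hT : Triangle.mk f g h ∈ distTriang C) (hA : Van A X) (hB : Van B X) : Van E X := by
  intro k
  obtain ⟨(l : B ⟶ X), (hl : k = g ≫ l)⟩ := Triangle.yoneda_exact₂ _ hT k (hA _)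
  rw [hl, hB l, comp_zero]

lemma Van.three {X A E B : C} {f : A ⟶ E} {g : E ⟶ B} {h : B ⟶ A⟦(1 : ℤ)⟧}
    (hT : Triangle.mk f g h ∈ distTriang C) (hE : Van X E) (hA : Van X (A⟦(1 : ℤ)⟧)) :
    Van X B := by
  intro k
  obtain ⟨(l : X ⟶ E), (hl : k = l ≫ g)⟩ := Triangle.coyoneda_exact₃ _ hT k (hA _)
  rw [hl, hE l, zero_comp]

lemma Van.one {X A E B : C} {f : A ⟶ E} {g : E ⟶ B} {h : B ⟶ A⟦(1 : ℤ)⟧}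
    (hT : Triangle.mk f g h ∈ distTriang C) (hE : Van X (E⟦(1 : ℤ)⟧)) (hB : Van X B) :
    Van X (A⟦(1 : ℤ)⟧) := by
  intro k
  obtain ⟨(l : X ⟶ B), (hl : k = l ≫ h)⟩ := Triangle.coyoneda_exact₁ _ hT k (hE _)
  rw [hl, hB l, zero_comp]

lemma zero_mem_le {S le : Set C} (hS : IsTriangulatedSub S) (h : IsTStructureOn S le)
    {Z : C} (hZ : IsZero Z) : Z ∈ le := by
  obtain ⟨A, B, hA, hB, f, g, k, hT⟩ := h.exists_triangle Z (hS.zero Z hZ)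
  have hAB : Van A B := fun q => hB.2 A hA q
  have hA1 : Van (A⟦(1 : ℤ)⟧) B := fun q => hB.2 _ (h.shift A hA) q
  have hBB : 𝟙 B = 0 := by
    obtain ⟨l, hl⟩ := Triangle.yoneda_exact₃ _ hT (𝟙 B) (hZ.eq_of_src _ _)
    rw [hl]
    exact (congrArg (fun q => k ≫ q) (hA1 l)).trans comp_zero
  have hB0 : IsZero B := (IsZero.iff_id_eq_zero B).2 hBB
  have hAA : 𝟙 A = 0 := by
    have : Van A (A⟦(1 : ℤ)⟧⟦(-1 : ℤ)⟧) := by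
      apply Van.down
      refine Van.one hT ?_ ?_
      · intro q
        exact (((shiftFunctor C (1 : ℤ)).map_isZero hZ).eq_of_tgt _ _)
      · exact fun q => hB0.eq_of_tgt _ _
    exact this.isoR ((shiftFunctorCompIsoId C (1 : ℤ) (-1) (by norm_num)).symm.app A) (𝟙 A)
  exact h.isoClosed (((IsZero.iff_id_eq_zero A).2 hAA).iso hZ) hA

lemma heart_iff {S le : Set C} (hsub : le ⊆ S) (hS : ∀ X ∈ S, X⟦(-1 : ℤ)⟧ ∈ S)
    (hiso : ∀ {X Y : C}, (X ≅ Y) → X ∈ le → Y ∈ le) (Y : C) :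
    Y ∈ heartOn S le ↔ Y ∈ le ∧ ∀ X ∈ le, Van (X⟦(1 : ℤ)⟧) Y := by
  have e0 : (-0 : ℤ) = 0 := by norm_num
  have e1 : (1 - 0 : ℤ) = 1 := by norm_num
  unfold heartOn leN geN
  rw [e0, e1]
  constructor
  · rintro ⟨⟨Z, hZ, ⟨e⟩⟩, ⟨W, hW, ⟨e'⟩⟩⟩
    refine ⟨hiso (e ≪≫ (shiftFunctorZero C ℤ).app Z).symm hZ, fun X hX => ?_⟩
    have : Van X W := fun q => hW.2 X hX q
    exact (this.shift 1).isoR e'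
  · rintro ⟨hY, hv⟩
    refine ⟨⟨Y, hY, ⟨((shiftFunctorZero C ℤ).app Y).symm⟩⟩,
      ⟨Y⟦(-1 : ℤ)⟧, ⟨hS _ (hsub hY), fun X hX q => (hv X hX).down q⟩, ⟨desh Y⟩⟩⟩

lemma star_iso {P Q : Set C} {X Y : C} (e : X ≅ Y) (hX : X ∈ star P Q) : Y ∈ star P Q := by
  obtain ⟨A, hA, B, hB, f, g, h, hT⟩ := hX
  refine ⟨A, hA, B, hB, f ≫ e.hom, e.inv ≫ g, h, ?_⟩
  refine isomorphic_distinguished _ hT _ ?_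
  refine Triangle.isoMk _ _ (Iso.refl A) e.symm (Iso.refl B) ?_ ?_ ?_
  · change (f ≫ e.hom) ≫ e.inv = 𝟙 A ≫ f
    simp
  · change (e.inv ≫ g) ≫ 𝟙 B = e.inv ≫ g
    simp
  · change h ≫ (shiftFunctor C (1 : ℤ)).map (𝟙 A) = 𝟙 B ≫ h
    simp

/-- Theorem 2.7, item 2: the heart of the glued t-structure
`T₂^{≤0} * (T₁^{≤0}[1])` is `A₂ * (A₁[1])`, where `A₁`, `A₂` are the hearts of the
two given compatible t-structures. -/
theorem glued_heart {C : Type u} [Category.{v} C] [HasZeroObject C] [Preadditive C]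
    [HasShift C ℤ] [∀ n : ℤ, (shiftFunctor C n).Additive] [Pretriangulated C]
    (S₁ S₂ le₁ le₂ : Set C) (hSOD : IsSOD S₁ S₂)
    (h₁ : IsTStructureOn S₁ le₁) (h₂ : IsTStructureOn S₂ le₂)
    (hcomp : Compatible S₂ le₁ le₂) :
    heartOn Set.univ (glued le₁ le₂) = star (heartOn S₂ le₂) (shSet (heartOn S₁ le₁) 1) := by
  have hz₁ := fun Z hZ => zero_mem_le hSOD.sub₁ h₁ (Z := Z) hZ
  have hz₂ := fun Z hZ => zero_mem_le hSOD.sub₂ h₂ (Z := Z) hZ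
  have H₁ := heart_iff h₁.subset (hSOD.sub₁.shift (-1)) h₁.isoClosed
  have H₂ := heart_iff h₂.subset (hSOD.sub₂.shift (-1)) h₂.isoClosed
  have H := heart_iff (S := Set.univ) (le := glued le₁ le₂) (Set.subset_univ _)
    (fun _ _ => Set.mem_univ _) (fun e h => star_iso e h)
  have hc : ∀ X ∈ le₁, ∀ Y ∈ S₂, (∀ Z ∈ le₂, Van (Z⟦(1 : ℤ)⟧) Y) → Van (X⟦(1 : ℤ)⟧) Y := by
    intro X hX Y hY hv
    exact Van.up fun q => hcomp X hX _
      ⟨hSOD.sub₂.shift (-1) Y hY, fun Z hZ q => (hv Z hZ).down q⟩ q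
  have hm₂ : ∀ X ∈ le₂, X ∈ glued le₁ le₂ := fun X hX => by
    open ZeroObject in exact ⟨X, hX, 0, ⟨0, hz₁ 0 (isZero_zero C),
      ⟨(isZero_zero C).iso ((shiftFunctor C (1 : ℤ)).map_isZero (isZero_zero C))⟩⟩,
      𝟙 X, 0, 0, contractible_distinguished X⟩
  have hm₁ : ∀ X ∈ le₁, X⟦(1 : ℤ)⟧ ∈ glued le₁ le₂ := fun X hX => by
    open ZeroObject in exact ⟨0, hz₂ 0 (isZero_zero C), X⟦(1 : ℤ)⟧, ⟨X, hX, ⟨Iso.refl _⟩⟩,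
      0, 𝟙 _, 0, contractible_distinguished₁ _⟩
  ext E
  rw [H]
  constructor
  · rintro ⟨⟨A, hA, B, ⟨B', hB', ⟨e⟩⟩, f, g, h, hT⟩, hv⟩
    have hAv : ∀ X ∈ le₂, Van (X⟦(1 : ℤ)⟧) A := by
      intro X hX
      apply Van.unshift (n := 1)
      refine Van.one hT ((hv X (hm₂ X hX)).shift 1) ?_
      refine Van.isoR (Van.shift (n := 1) fun q => ?_) e
      exact hSOD.orth _ (hSOD.sub₂.shift 1 X (h₂.subset hX)) _ (h₁.subset hB') q
    refine ⟨A, (H₂ A).2 ⟨hA, hAv⟩, B, ⟨B', (H₁ B').2 ⟨hB', fun X hX => ?_⟩, ⟨e⟩⟩,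
      f, g, h, hT⟩
    apply Van.unshift (n := 1)
    refine Van.isoR ?_ e.symm
    exact Van.three hT (hv _ (hm₁ X hX)) ((hc X hX A (h₂.subset hA) hAv).shift 1)
  · rintro ⟨A, hA, B, ⟨B', hB', ⟨e⟩⟩, f, g, h, hT⟩
    obtain ⟨hA, hAv⟩ := (H₂ A).1 hA
    obtain ⟨hB', hBv⟩ := (H₁ B').1 hB'
    refine ⟨⟨A, hA, B, ⟨B', hB', ⟨e⟩⟩, f, g, h, hT⟩, ?_⟩
    rintro X ⟨P, hP, Q, ⟨Q', hQ', ⟨e'⟩⟩, f', g', h', hT'⟩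
    apply Van.up
    refine Van.extL hT' (Van.down ?_) (Van.down ?_)
    · refine Van.ext hT (hAv P hP) fun q => ?_
      exact hSOD.orth _ (hSOD.sub₂.shift 1 P (h₂.subset hP)) _
        (hSOD.sub₁.isoClosed e.symm (hSOD.sub₁.shift 1 _ (h₁.subset hB'))) q
    · refine Van.isoL ?_ ((shiftFunctor C (1 : ℤ)).mapIso e')
      refine Van.ext hT ?_ ?_
      · exact hc _ (h₁.shift _ hQ') A (h₂.subset hA) hAv
      · exact ((hBv Q' hQ').shift 1).isoR e

end Paper
end

section
/- Let T be a triangulated category with a semiorthogonal decomposition T = ⟨T₁, T₂⟩, and let T₁^{≤0} and T₂^{≤0} be t-structures on T₁ and T₂ respectively that are compatible in T, so that T^{≤0} := T₂^{≤0} * (T₁^{≤0}[1]) is a t-structure on T. Then its right orthogonal satisfies T^{≥1} := (T^{≤0})^⊥ = T₂^{≥1} * (T₁^{≥1}[1]). -/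
open CategoryTheory Category Limits Pretriangulated

namespace Paper

universe v u

variable {C : Type u} [Category.{v} C] [HasZeroObject C] [Preadditive C]
  [HasShift C ℤ] [∀ n : ℤ, (shiftFunctor C n).Additive] [Pretriangulated C]

theorem IsTStructureOn.zero_mem {S le : Set C} (hS : IsTriangulatedSub S)
    (h : IsTStructureOn S le) (Z : C) (hZ : IsZero Z) : Z ∈ le := by
  obtain ⟨A, B, hA, hB, f, g, k, hT⟩ := h.exists_triangle Z (hS.zero Z hZ)
  have hk : IsIso k := (Triangle.isZero₂_iff_isIso₃ _ hT).1 hZ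
  have h0 : inv k = 0 := hB.2 _ (h.shift A hA) _
  have hz : IsZero (A⟦(1 : ℤ)⟧) := by
    rw [IsZero.iff_id_eq_zero, ← IsIso.inv_hom_id k, h0, zero_comp]
  exact h.isoClosed (hz.iso hZ) (h.shift A hA)

open ZeroObject in
theorem left_mem_star {X Y : Set C} (hY : ∀ Z : C, IsZero Z → Z ∈ Y) (A : C) (hA : A ∈ X) :
    A ∈ star X Y :=
  ⟨A, hA, _, hY _ (isZero_zero C), 𝟙 A, 0, 0, contractible_distinguished A⟩

open ZeroObject in
theorem right_mem_star {X Y : Set C} (hX : ∀ Z : C, IsZero Z → Z ∈ X) (B : C) (hB : B ∈ Y) :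
    B ∈ star X Y :=
  ⟨_, hX _ (isZero_zero C), B, hB, 0, 𝟙 B, 0, contractible_distinguished₁ B⟩

/-- the right orthogonal of the glued aisle `T₂^{≤0} * (T₁^{≤0}[1])`
is `T₂^{≥1} * (T₁^{≥1}[1])`. -/
theorem glued_coaisle {C : Type u} [Category.{v} C] [HasZeroObject C] [Preadditive C]
    [HasShift C ℤ] [∀ n : ℤ, (shiftFunctor C n).Additive] [Pretriangulated C]
    (S₁ S₂ le₁ le₂ : Set C) (hSOD : IsSOD S₁ S₂)
    (h₁ : IsTStructureOn S₁ le₁) (h₂ : IsTStructureOn S₂ le₂)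
    (hcomp : Compatible S₂ le₁ le₂) :
    rOrth (glued le₁ le₂) = star (S₂ ∩ rOrth le₂) (shSet (S₁ ∩ rOrth le₁) 1) := by
  have z₁ := h₁.zero_mem hSOD.sub₁
  have z₂ := h₂.zero_mem hSOD.sub₂
  ext Y
  constructor
  · intro hY
    obtain ⟨A, B, hA, hB, f, g, k, hT⟩ := hSOD.exists_triangle Y
    have hA' : A ∈ rOrth le₂ := by
      intro P hP φ
      have h0 : φ ≫ f = 0 := by
        refine hY P (left_mem_star ?_ P hP) _
        intro Z hZ
        exact ⟨Z, z₁ Z hZ, ⟨hZ.iso ((shiftFunctor C (1 : ℤ)).map_isZero hZ)⟩⟩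
      obtain ⟨ψ, hψ⟩ := Triangle.coyoneda_exact₂ _ (inv_rot_of_distTriang _ hT) φ h0
      have : ψ = 0 := hSOD.orth P (h₂.subset hP) _ (hSOD.sub₁.shift (-1) B hB) ψ
      exact hψ.trans (by rw [this]; exact zero_comp)
    refine ⟨A, ⟨hA, hA'⟩, B, ⟨B⟦(-1 : ℤ)⟧, ⟨hSOD.sub₁.shift _ _ hB, ?_⟩,
      ⟨(shiftEquiv C (1 : ℤ)).counitIso.symm.app B⟩⟩, f, g, k, hT⟩
    intro Q hQ φ
    let e : (B⟦(-1 : ℤ)⟧)⟦(1 : ℤ)⟧ ≅ B := (shiftEquiv C (1 : ℤ)).counitIso.app B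
    have key : φ⟦(1 : ℤ)⟧' ≫ e.hom = 0 := by
      have h0 : (φ⟦(1 : ℤ)⟧' ≫ e.hom) ≫ k = 0 := by
        obtain ⟨χ, hχ⟩ := (shiftFunctor C (1 : ℤ)).map_surjective ((φ⟦(1 : ℤ)⟧' ≫ e.hom) ≫ k)
        rw [← hχ, hcomp Q hQ A ⟨hA, hA'⟩ χ, Functor.map_zero]
      obtain ⟨ψ, hψ⟩ := Triangle.coyoneda_exact₃ _ hT _ h0
      have : ψ = 0 := hY _ (right_mem_star z₂ _ ⟨Q, hQ, ⟨Iso.refl _⟩⟩) ψ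
      exact hψ.trans (by rw [this]; exact zero_comp)
    apply (shiftFunctor C (1 : ℤ)).map_injective
    rw [Functor.map_zero, ← cancel_mono e.hom, key, zero_comp]
  · rintro ⟨A, hA, B, ⟨B', hB', ⟨eB⟩⟩, f, g, k, hT⟩ X ⟨P, hP, Q, ⟨Q', hQ', ⟨eQ⟩⟩, p, q, r, hX⟩ φ
    have hBS : B ∈ S₁ := hSOD.sub₁.isoClosed eB.symm (hSOD.sub₁.shift 1 _ hB'.1)
    have hp : p ≫ φ = 0 := by
      obtain ⟨ψ, hψ⟩ := Triangle.coyoneda_exact₂ _ hT (p ≫ φ)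
        (hSOD.orth P (h₂.subset hP) B hBS _)
      have : ψ = 0 := hA.2 P hP ψ
      exact hψ.trans (by rw [this]; exact zero_comp)
    obtain ⟨θ, hθ⟩ := Triangle.yoneda_exact₂ _ hX φ hp
    change Q ⟶ Y at θ
    have hg : θ ≫ g = 0 := by
      obtain ⟨χ, hχ⟩ := (shiftFunctor C (1 : ℤ)).map_surjective (eQ.inv ≫ (θ ≫ g) ≫ eB.hom)
      rw [hB'.2 Q' hQ' χ, Functor.map_zero] at hχ
      rw [← cancel_epi eQ.inv, ← cancel_mono eB.hom, assoc, ← hχ, comp_zero, zero_comp]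
    obtain ⟨ψ, hψ⟩ := Triangle.coyoneda_exact₂ _ hT θ hg
    have : ψ = 0 := hcomp Q (h₁.isoClosed eQ.symm (h₁.shift _ hQ')) A hA ψ
    have hθ0 : θ = 0 := hψ.trans (by rw [this]; exact zero_comp)
    exact hθ.trans (by rw [hθ0]; exact comp_zero)

end Paper
end
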